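/- Let (Ω,Σ,μ) be a finite measure space, Z a real Banach space, and X ⊆ Z* a norm-closed subspace which is norming for Z. Suppose that the closed unit ball B_{X*} of X* equipped with the weak* topology is convex block compact, and that X equipped with the Mackey topology μ(X,Z) of the dual pair ⟨X,Z⟩ is complete. If ν : Σ → Z* is a countably additive μ-continuous vector measure satisfying condition (G), then ν(A) ∈ X for every A ∈ Σ. -/

import Mathlib

open MeasureTheory Filter Set Topology
open scoped UniformConvergence

noncomputable section

/-- The topology `σ(Z,X)` on `Z` of pointwise convergence on a subspace `X ⊆ Z*`. -/
def sigmaTop {Z : Type*} [NormedAddCommGroup Z] [NormedSpace ℝ Z]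
    (X : Submodule ℝ (Z →L[ℝ] ℝ)) : TopologicalSpace Z :=
  TopologicalSpace.induced (fun z => fun x : X => (x : Z →L[ℝ] ℝ) z) Pi.topologicalSpace

/-- The weak* topology on the dual of `E`: pointwise convergence on `E`. -/
def wstarTop (E : Type*) [NormedAddCommGroup E] [NormedSpace ℝ E] :
    TopologicalSpace (E →L[ℝ] ℝ) :=
  TopologicalSpace.induced (fun f => (f : E → ℝ)) Pi.topologicalSpace

/-- A norm-closed subspace `X ⊆ Z*` is norming for `Z` if
`|||z||| = sup {⟨x,z⟩ : x ∈ B_X}` is an equivalent norm on `Z`; since this sup is always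
`≤ ‖z‖`, this amounts to the existence of `c > 0` with `c⬝‖z‖ ≤ |||z|||` for all `z`. -/
def IsNorming {Z : Type*} [NormedAddCommGroup Z] [NormedSpace ℝ Z]
    (X : Submodule ℝ (Z →L[ℝ] ℝ)) : Prop :=
  ∃ c > (0 : ℝ), ∀ z : Z, c * ‖z‖ ≤ sSup {r : ℝ | ∃ x ∈ X, ‖x‖ ≤ 1 ∧ r = x z}

/-- The average range `𝒜_ν(A) = {ν(B)/μ(B) : B ∈ Σ, B ⊆ A, μ(B) > 0}`. -/
def avgRange {Ω : Type*} [MeasurableSpace Ω] {Z : Type*} [NormedAddCommGroup Z]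
    [NormedSpace ℝ Z] (μ : Measure Ω) (ν : VectorMeasure Ω (Z →L[ℝ] ℝ)) (A : Set Ω) :
    Set (Z →L[ℝ] ℝ) :=
  {w | ∃ B : Set Ω, MeasurableSet B ∧ B ⊆ A ∧ 0 < μ B ∧ w = (μ B).toReal⁻¹ • ν B}

/-- Condition (G): for every `A ∈ Σ` with `μ(A) > 0`, the `w*`-closed convex hull of the
average range `𝒜_ν(A)` intersects `X`. -/
def CondG {Ω : Type*} [MeasurableSpace Ω] {Z : Type*} [NormedAddCommGroup Z]
    [NormedSpace ℝ Z] (μ : Measure Ω) (ν : VectorMeasure Ω (Z →L[ℝ] ℝ))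
    (X : Submodule ℝ (Z →L[ℝ] ℝ)) : Prop :=
  ∀ A : Set Ω, MeasurableSet A → 0 < μ A →
    (@closure _ (wstarTop Z) (convexHull ℝ (avgRange μ ν A)) ∩
      (X : Set (Z →L[ℝ] ℝ))).Nonempty

/-- `h` is a convex block subsequence of `g`: `h k = ∑_{n ∈ I k} a n • g n` where the finite
sets `I k` satisfy `max (I k) < min (I (k+1))` and the `a n` are non-negative reals summing
to `1` over each `I k`. -/
def ConvexBlock {E : Type*} [AddCommMonoid E] [Module ℝ E] (g h : ℕ → E) : Prop :=
  ∃ (I : ℕ → Finset ℕ) (a : ℕ → ℝ),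
    (∀ k, ∀ n ∈ I k, ∀ m ∈ I (k + 1), n < m) ∧
    (∀ n, 0 ≤ a n) ∧ (∀ k, ∑ n ∈ I k, a n = 1) ∧
    (∀ k, h k = ∑ n ∈ I k, a n • g n)

/-- `(B_{X*}, w*)` is convex block compact: every sequence in the closed unit ball of `X*`
admits a convex block subsequence which is `w*`-convergent. -/
def DualBallConvexBlockCompact (X : Type*) [NormedAddCommGroup X] [NormedSpace ℝ X] : Prop :=
  ∀ g : ℕ → (X →L[ℝ] ℝ), (∀ n, ‖g n‖ ≤ 1) →
    ∃ h : ℕ → (X →L[ℝ] ℝ), ConvexBlock g h ∧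
      ∃ f : X →L[ℝ] ℝ, Tendsto h atTop (@nhds _ (wstarTop X) f)

/-- The Mackey uniformity `μ(X,Z)` on `X`: the uniformity of uniform convergence on all
absolutely convex `σ(Z,X)`-compact subsets of `Z`. -/
def mackeyUniformity {Z : Type*} [NormedAddCommGroup Z] [NormedSpace ℝ Z]
    (X : Submodule ℝ (Z →L[ℝ] ℝ)) : UniformSpace X :=
  UniformSpace.comap
    (fun x : X => UniformOnFun.ofFun
      {K : Set Z | Convex ℝ K ∧ Balanced ℝ K ∧ @IsCompact _ (sigmaTop X) K}
      (fun z : Z => (x : Z →L[ℝ] ℝ) z))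
    inferInstance

/-!
Write `T z ∈ L¹(μ)` for the density of the scalar measure `⟨ν(·), z⟩`. By Grothendieck's
completeness theorem it suffices that each `ν A` is `σ(Z,X)`-continuous at `0` on every absolutely
convex `σ(Z,X)`-compact set `K`.

Let `z → 0` in `K` along an ultrafilter, with limit `ζ` in `Z**`. As `ν` is countably additive in
norm, `ζ ∘ ν` is a measure; its density `g` is the weak limit of `T z` in `L¹(μ)`. For convex
`σ(Z,X)`-compact `C` the set `T(C)` is norm closed: replace a sequence in `C` by a
`σ(Z,X)`-convergent convex block subsequence, and observe that by (G) a sequence which is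
`σ(Z,X)`-null cannot have `T`-images converging to anything but `0`. Being convex, `T(C)` is weakly
closed, so applying this to `C = K ∩ {|x| ≤ δ}` shows that `g = T h` for some `h` with `|x h| ≤ δ`,
for every `x ∈ X` and `δ > 0`. If `g ≥ c > 0` on a set of positive measure, then (G) provides
`x ∈ X` with `x h ≥ c` for all such `h`, a contradiction. Hence `g = 0`, and `ν A z → ∫_A g = 0`.
-/

namespace ConvexBlock

section Module

variable {E F : Type*} [AddCommGroup E] [Module ℝ E] [AddCommGroup F] [Module ℝ F]

theorem le_of_mem_block {I : ℕ → Finset ℕ} {a : ℕ → ℝ}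
    (hI : ∀ k, ∀ n ∈ I k, ∀ m ∈ I (k + 1), n < m) (ha : ∀ k, ∑ n ∈ I k, a n = 1) (k : ℕ) :
    ∀ n ∈ I k, k ≤ n := by
  induction k with
  | zero => exact fun n _ => n.zero_le
  | succ k ih =>
    intro n hn
    obtain ⟨m, hm⟩ : (I k).Nonempty :=
      Finset.nonempty_of_sum_ne_zero ((ha k).trans_ne one_ne_zero)
    exact (ih m hm).trans_lt (hI k m hm n hn)

theorem mem_of_convex {g h : ℕ → E} (hgh : ConvexBlock g h) {K : Set E} (hK : Convex ℝ K)
    (hg : ∀ n, g n ∈ K) (k : ℕ) : h k ∈ K := by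
  obtain ⟨I, a, -, ha0, ha1, hh⟩ := hgh
  rw [hh]
  exact hK.sum_mem (fun n _ => ha0 n) (ha1 k) fun n _ => hg n

theorem map {g h : ℕ → E} (hgh : ConvexBlock g h) (L : E →ₗ[ℝ] F) :
    ConvexBlock (L ∘ g) (L ∘ h) := by
  obtain ⟨I, a, hI, ha0, ha1, hh⟩ := hgh
  exact ⟨I, a, hI, ha0, ha1, fun k => by simp [hh]⟩

theorem exists_lift {L : E →ₗ[ℝ] F} {g : ℕ → E} {h : ℕ → F} (hgh : ConvexBlock (L ∘ g) h) :
    ∃ b, ConvexBlock g b ∧ h = L ∘ b := by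
  obtain ⟨I, a, hI, ha0, ha1, hh⟩ := hgh
  exact ⟨fun k => ∑ n ∈ I k, a n • g n, ⟨I, a, hI, ha0, ha1, fun _ => rfl⟩,
    funext fun k => by simp [hh]⟩

end Module

theorem tendsto {E : Type*} [AddCommGroup E] [Module ℝ E] [TopologicalSpace E]
    [LocallyConvexSpace ℝ E] {g h : ℕ → E} (hgh : ConvexBlock g h) {l : E}
    (hg : Tendsto g atTop (𝓝 l)) : Tendsto h atTop (𝓝 l) := by
  obtain ⟨I, a, hI, ha0, ha1, hh⟩ := hgh
  refine (LocallyConvexSpace.convex_basis (𝕜 := ℝ) l).tendsto_right_iff.2 fun s hs => ?_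
  obtain ⟨N, hN⟩ := eventually_atTop.1 (hg.eventually_mem hs.1)
  filter_upwards [eventually_ge_atTop N] with k hk
  rw [hh]
  exact hs.2.sum_mem (fun n _ => ha0 n) (ha1 k) fun n hn =>
    hN n (hk.trans (le_of_mem_block hI ha1 k n hn))

end ConvexBlock

section Separation

variable {E : Type*} [AddCommGroup E] [Module ℝ E] [TopologicalSpace E] [IsTopologicalAddGroup E]
  [ContinuousSMul ℝ E] [LocallyConvexSpace ℝ E]

theorem exists_continuousLinearMap_sub_le {K : Set E} (hK : Convex ℝ K) (hK0 : (0 : E) ∈ K)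
    {φ : E →ₗ[ℝ] ℝ} (hφ : Tendsto φ (𝓝[K] 0) (𝓝 0)) {ε : ℝ} (hε : 0 < ε) :
    ∃ ℓ : E →L[ℝ] ℝ, ∀ z ∈ K, φ z - ℓ z ≤ ε := by
  obtain ⟨U, ⟨hU0, hUo, hUc⟩, hU⟩ :=
    ((LocallyConvexSpace.convex_open_basis_zero ℝ E).inf_principal K).mem_iff.1
      (hφ.eventually_lt_const hε)
  have hdisj : Disjoint (U ×ˢ Ioi ε) ((fun z => (z, φ z)) '' K) := by
    rw [Set.disjoint_right]
    rintro _ ⟨z, hz, rfl⟩ ⟨hzU, hzε⟩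
    exact lt_asymm (show ε < φ z from hzε) (hU ⟨hzU, hz⟩)
  obtain ⟨f, u, hfU, hfK⟩ := geometric_hahn_banach_open (hUc.prod (convex_Ioi ε))
    (hUo.prod isOpen_Ioi) (hK.linear_image (LinearMap.id.prod φ)) hdisj
  have hf0 : f (0, 0) = 0 := map_zero f
  have hf (z : E) (t : ℝ) : f (z, t) = f (z, 0) + t * f (0, 1) := by
    rw [← smul_eq_mul, ← map_smul, ← map_add]
    simp
  have hu : u ≤ 0 := hf0 ▸ hfK (0, 0) ⟨0, hK0, by simp⟩
  have hslope {t : ℝ} (ht : ε < t) : t * f (0, 1) < u := by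
    simpa [hf 0 t, hf0] using hfU (0, t) ⟨hU0, ht⟩
  have hneg : f (0, 1) < 0 := by
    have := hslope (lt_add_one ε)
    nlinarith
  have hεu : ε * f (0, 1) ≤ u :=
    le_of_tendsto (f := fun t => t * f (0, 1)) (x := 𝓝[>] ε)
      ((continuous_mul_const _).tendsto ε |>.mono_left nhdsWithin_le_nhds)
      (eventually_nhdsWithin_of_forall fun t ht => (hslope ht).le)
  refine ⟨-(f (0, 1))⁻¹ • f.comp (ContinuousLinearMap.inl ℝ E ℝ), fun z hz => ?_⟩
  have hgraph := hεu.trans (hfK (z, φ z) ⟨z, hz, rfl⟩)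
  rw [hf z] at hgraph
  have : φ z + (f (0, 1))⁻¹ * f (z, 0) = (f (z, 0) + φ z * f (0, 1)) / f (0, 1) := by
    field_simp [hneg.ne]
    ring
  simpa [this, div_le_iff_of_neg hneg] using hgraph

theorem exists_continuousLinearMap_abs_sub_le {K : Set E} (hK : Convex ℝ K) (hKb : Balanced ℝ K)
    {φ : E →ₗ[ℝ] ℝ} (hφ : Tendsto φ (𝓝[K] 0) (𝓝 0)) {ε : ℝ} (hε : 0 < ε) :
    ∃ ℓ : E →L[ℝ] ℝ, ∀ z ∈ K, |φ z - ℓ z| ≤ ε := by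
  obtain rfl | hne := K.eq_empty_or_nonempty
  · exact ⟨0, by simp⟩
  obtain ⟨ℓ, hℓ⟩ := exists_continuousLinearMap_sub_le hK (hKb.zero_mem hne) hφ hε
  refine ⟨ℓ, fun z hz => abs_le.2 ⟨?_, hℓ z hz⟩⟩
  have := hℓ (-z) (hKb.neg_mem_iff.2 hz)
  simp only [map_neg] at this
  linarith

theorem mem_of_convex_of_isClosed_of_forall_tendsto {ι : Type*} {S : Set E} (hS : Convex ℝ S)
    (hSc : IsClosed S) {l : Filter ι} [NeBot l] {u : ι → E} (hu : ∀ᶠ i in l, u i ∈ S) {g : E}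
    (hg : ∀ ψ : E →L[ℝ] ℝ, Tendsto (fun i => ψ (u i)) l (𝓝 (ψ g))) : g ∈ S := by
  by_contra hgS
  obtain ⟨ψ, c, hψS, hψg⟩ := geometric_hahn_banach_closed_point hS hSc hgS
  exact (le_of_tendsto (hg ψ) (hu.mono fun i hi => (hψS _ hi).le)).not_gt hψg

end Separation

theorem exists_abs_sub_bilin_le {E F : Type*} [AddCommGroup E] [Module ℝ E]
    [AddCommGroup F] [Module ℝ F] {B : E →ₗ[ℝ] F →ₗ[ℝ] ℝ} {K : Set E} (hK : Convex ℝ K)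
    (hKb : Balanced ℝ K) {φ : E →ₗ[ℝ] ℝ}
    (hφ : Tendsto φ (@nhdsWithin (WeakBilin B) _ 0 K) (𝓝 0)) {ε : ℝ} (hε : 0 < ε) :
    ∃ y, ∀ z ∈ K, |φ z - B z y| ≤ ε := by
  obtain ⟨ℓ, hℓ⟩ :=
    exists_continuousLinearMap_abs_sub_le (E := WeakBilin B) hK hKb (φ := φ) hφ hε
  obtain ⟨y, rfl⟩ := B.dualEmbedding_surjective ℓ
  exact ⟨y, hℓ⟩

section DualPair

variable {Z : Type*} [NormedAddCommGroup Z] [NormedSpace ℝ Z] {X : Submodule ℝ (Z →L[ℝ] ℝ)}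

/-- The bilinear pairing of `Z` with a subspace `X ⊆ Z*`. The topology of `WeakBilin (pairing X)`
is `sigmaTop X` by definition, which gives access to the theory of weak topologies. -/
def pairing (X : Submodule ℝ (Z →L[ℝ] ℝ)) : Z →ₗ[ℝ] X →ₗ[ℝ] ℝ :=
  ((ContinuousLinearMap.coeLM ℝ).comp X.subtype).flip

theorem tendsto_nhds_sigmaTop_iff {ι : Type*} {l : Filter ι} {u : ι → Z} {z : Z} :
    Tendsto u l (@nhds Z (sigmaTop X) z) ↔ ∀ x ∈ X, Tendsto (fun i => x (u i)) l (𝓝 (x z)) := by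
  rw [sigmaTop, nhds_induced, tendsto_comap_iff, tendsto_pi_nhds, SetLike.forall]
  rfl

theorem continuous_sigmaTop {x : Z →L[ℝ] ℝ} (hx : x ∈ X) :
    Continuous[sigmaTop X, _] x :=
  WeakBilin.eval_continuous (pairing X) ⟨x, hx⟩

theorem isCompact_sigmaTop_inter_preimage {K : Set Z} (hK : @IsCompact _ (sigmaTop X) K)
    {x : Z →L[ℝ] ℝ} (hx : x ∈ X) {s : Set ℝ} (hs : IsClosed s) :
    @IsCompact _ (sigmaTop X) (K ∩ x ⁻¹' s) :=
  @IsCompact.inter_right Z (sigmaTop X) K _ hK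
    (@IsClosed.preimage Z ℝ (sigmaTop X) _ x (continuous_sigmaTop hx) s hs)

theorem exists_mem_abs_sub_le {K : Set Z} (hK : Convex ℝ K) (hKb : Balanced ℝ K)
    {φ : Z →L[ℝ] ℝ} (hφ : Tendsto φ (@nhdsWithin Z (sigmaTop X) 0 K) (𝓝 0)) {ε : ℝ} (hε : 0 < ε) :
    ∃ x ∈ X, ∀ z ∈ K, |φ z - x z| ≤ ε := by
  have happrox := exists_abs_sub_bilin_le (F := X) (B := pairing X) (φ := φ.toLinearMap) hK hKb
  obtain ⟨x, hx⟩ := happrox hφ hε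
  exact ⟨x, x.2, hx⟩

/-- The absolutely convex `σ(Z,X)`-compact sets, on which the Mackey topology `μ(X,Z)` is the
topology of uniform convergence. -/
def mackeySets (X : Submodule ℝ (Z →L[ℝ] ℝ)) : Set (Set Z) :=
  {K | Convex ℝ K ∧ Balanced ℝ K ∧ @IsCompact _ (sigmaTop X) K}

theorem mackeySets_nonempty : (mackeySets X).Nonempty :=
  ⟨{0}, convex_singleton 0, balanced_zero, @isCompact_singleton _ (sigmaTop X) 0⟩

theorem directedOn_mackeySets : DirectedOn (· ⊆ ·) (mackeySets X) := by
  rintro K hK L hL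
  obtain rfl | hKne := K.eq_empty_or_nonempty
  · exact ⟨L, hL, empty_subset L, subset_rfl⟩
  obtain rfl | hLne := L.eq_empty_or_nonempty
  · exact ⟨K, hK, subset_rfl, empty_subset K⟩
  obtain ⟨hKc, hKb, hKk⟩ := hK
  obtain ⟨hLc, hLb, hLk⟩ := hL
  refine ⟨Set.image2 (· + ·) K L, ⟨hKc.add hLc, hKb.add hLb, ?_⟩,
    fun z hz => ⟨z, hz, 0, hLb.zero_mem hLne, add_zero z⟩,
    fun z hz => ⟨0, hKb.zero_mem hKne, z, hz, zero_add z⟩⟩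
  exact IsCompact.add (N := WeakBilin (pairing X)) hKk hLk

theorem sUnion_mackeySets : ⋃₀ mackeySets X = univ := by
  refine eq_univ_of_forall fun z =>
    ⟨(fun t : ℝ => t • z) '' Metric.closedBall 0 1, ⟨?_, ?_, ?_⟩, 1, by simp, one_smul ℝ z⟩
  · exact (convex_closedBall 0 1).linear_image (LinearMap.toSpanSingleton ℝ Z z)
  · rintro a ha _ ⟨_, ⟨t, ht, rfl⟩, rfl⟩
    exact ⟨a • t, balanced_closedBall_zero.smul_mem ha ht, smul_assoc a t z⟩
  · let z' : WeakBilin (pairing X) := z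
    exact IsCompact.image (f := fun t => t • z') (isCompact_closedBall (0 : ℝ) 1) (by fun_prop)

theorem mem_of_forall_mackeySets_approx (hX : @CompleteSpace X (mackeyUniformity X))
    {φ : Z →L[ℝ] ℝ}
    (hφ : ∀ K ∈ mackeySets X, ∀ ε > 0, ∃ x ∈ X, ∀ z ∈ K, |φ z - x z| ≤ ε) : φ ∈ X := by
  let _ := mackeyUniformity X
  let toFun (f : Z →L[ℝ] ℝ) : Z →ᵤ[mackeySets X] ℝ := UniformOnFun.ofFun _ f
  have : T2Space (Z →ᵤ[mackeySets X] ℝ) := UniformOnFun.t2Space_of_covering sUnion_mackeySets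
  have hι : IsUniformInducing fun x : X => toFun x := ⟨rfl⟩
  have hclosed : IsClosed (range fun x : X => toFun x) := hι.isComplete_range.isClosed
  have hmem : toFun φ ∈ closure (range fun x : X => toFun x) := by
    rw [mem_closure_iff_nhds_basis (UniformOnFun.hasBasis_nhds_of_basis Z ℝ _ (toFun φ)
      mackeySets_nonempty directedOn_mackeySets Metric.uniformity_basis_dist_le)]
    rintro ⟨K, ε⟩ ⟨hK, hε⟩
    obtain ⟨x, hx, hxK⟩ := hφ K hK ε hε
    exact ⟨_, ⟨⟨x, hx⟩, rfl⟩, fun z hz => (dist_comm _ _).trans_le (hxK z hz)⟩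
  obtain ⟨x, hx⟩ := hclosed.closure_subset hmem
  have : (x : Z →L[ℝ] ℝ) = φ := DFunLike.coe_injective hx
  exact this ▸ x.2

theorem mem_of_forall_mackeySets_tendsto (hX : @CompleteSpace X (mackeyUniformity X))
    {φ : Z →L[ℝ] ℝ}
    (hφ : ∀ K ∈ mackeySets X, Tendsto φ (@nhdsWithin Z (sigmaTop X) 0 K) (𝓝 0)) : φ ∈ X :=
  mem_of_forall_mackeySets_approx hX fun K hK _ hε =>
    exists_mem_abs_sub_le hK.1 hK.2.1 (hφ K hK) hε

theorem exists_tendsto_apply_of_norm_le (F : Ultrafilter Z) {R : ℝ}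
    (hR : ∀ᶠ z in (F : Filter Z), ‖z‖ ≤ R) :
    ∃ ζ : (Z →L[ℝ] ℝ) →L[ℝ] ℝ, ∀ φ, Tendsto (fun z => φ z) F (𝓝 (ζ φ)) := by
  let J (z : Z) : WeakDual ℝ (Z →L[ℝ] ℝ) :=
    StrongDual.toWeakDual (NormedSpace.inclusionInDoubleDual ℝ Z z)
  obtain ⟨ζ, -, hζ⟩ := (WeakDual.isCompact_closedBall (𝕜 := ℝ) (0 : StrongDual ℝ (Z →L[ℝ] ℝ))
    R).ultrafilter_le_nhds' (F.map J) (hR.mono fun z hz => by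
      simpa using! (NormedSpace.double_dual_bound ℝ Z z).trans hz)
  exact ⟨WeakDual.toStrongDual ζ, fun φ => ((WeakDual.eval_continuous φ).tendsto ζ).comp hζ⟩

theorem exists_norm_apply_le_of_pointwise_bounded {Y : Type*} [NormedAddCommGroup Y]
    [NormedSpace ℝ Y] [CompleteSpace Y] (B : Y →L[ℝ] Z →L[ℝ] ℝ) {S : Set Z}
    (hS : ∀ y, ∃ C, ∀ z ∈ S, ‖B y z‖ ≤ C) : ∃ C, ∀ z ∈ S, ∀ y, ‖B y z‖ ≤ C * ‖y‖ := by
  obtain ⟨C, hC⟩ := banach_steinhaus (g := fun z : S => B.flip z)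
    fun y => (hS y).imp fun C hC z => hC z z.2
  exact ⟨C, fun z hz => (B.flip z).le_of_opNorm_le (hC ⟨z, hz⟩)⟩

theorem IsNorming.exists_norm_le_of_isCompact (hX : IsNorming X)
    (hXc : IsClosed (X : Set (Z →L[ℝ] ℝ))) {K : Set Z} (hK : @IsCompact _ (sigmaTop X) K) :
    ∃ R, ∀ z ∈ K, ‖z‖ ≤ R := by
  have : CompleteSpace X := hXc.completeSpace_coe
  obtain ⟨C, hC⟩ := exists_norm_apply_le_of_pointwise_bounded (Y := X) X.subtypeL (S := K) fun x =>
    have hxK : IsCompact (x.1 '' K) :=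
      @IsCompact.image Z ℝ (sigmaTop X) _ K x hK (continuous_sigmaTop x.2)
    hxK.isBounded.exists_norm_le.imp fun C hC z hz => hC _ (mem_image_of_mem _ hz)
  obtain ⟨c, hc, hnorm⟩ := hX
  refine ⟨max C 0 / c, fun z hz => ?_⟩
  rw [le_div_iff₀' hc]
  refine (hnorm z).trans (csSup_le ⟨0, 0, X.zero_mem, by simp, by simp⟩ ?_)
  rintro _ ⟨x, hx, hx1, rfl⟩
  calc x z ≤ ‖x z‖ := le_abs_self _
    _ ≤ C * ‖x‖ := hC z hz ⟨x, hx⟩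
    _ ≤ max C 0 * 1 := by gcongr; exact le_max_left C 0
    _ = max C 0 := mul_one _

theorem DualBallConvexBlockCompact.exists_convexBlock_tendsto {Y : Type*} [NormedAddCommGroup Y]
    [NormedSpace ℝ Y] (hY : DualBallConvexBlockCompact Y) (B : Y →L[ℝ] Z →L[ℝ] ℝ) {w : ℕ → Z}
    {R : ℝ} (hw : ∀ n, ‖w n‖ ≤ R) :
    ∃ b, ConvexBlock w b ∧ ∃ f : Y → ℝ, ∀ y, Tendsto (fun k => B y (b k)) atTop (𝓝 (f y)) := by
  obtain ⟨r, hr, hrB⟩ : ∃ r > 0, ‖B.flip‖ * R ≤ r := ⟨max _ 1, by positivity, le_max_left _ 1⟩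
  obtain ⟨_, hblock, f, hf⟩ := hY ((r⁻¹ • B.flip : Z →L[ℝ] Y →L[ℝ] ℝ) ∘ w) fun n => by
    have hn : ‖B.flip (w n)‖ ≤ r := ((B.flip).le_opNorm_of_le (hw n)).trans hrB
    simpa [norm_smul, abs_of_pos hr] using inv_mul_le_one_of_le₀ hn hr.le
  obtain ⟨b, hb, rfl⟩ := hblock.exists_lift (L := (r⁻¹ • B.flip : Z →L[ℝ] Y →L[ℝ] ℝ).toLinearMap)
  rw [wstarTop, nhds_induced, tendsto_comap_iff, tendsto_pi_nhds] at hf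
  refine ⟨b, hb, fun y => r * f y, fun y => ((hf y).const_mul r).congr fun k => ?_⟩
  simp [hr.ne']

theorem exists_convexBlock_tendsto_of_isCompact (hXc : IsClosed (X : Set (Z →L[ℝ] ℝ)))
    (hX : IsNorming X) (hCBC : DualBallConvexBlockCompact X) {K : Set Z} (hK : Convex ℝ K)
    (hKc : @IsCompact _ (sigmaTop X) K) {w : ℕ → Z} (hw : ∀ n, w n ∈ K) :
    ∃ b, ConvexBlock w b ∧ ∃ z ∈ K, Tendsto b atTop (@nhds Z (sigmaTop X) z) := by
  obtain ⟨R, hR⟩ := hX.exists_norm_le_of_isCompact hXc hKc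
  obtain ⟨b, hb, f, hf⟩ :=
    hCBC.exists_convexBlock_tendsto X.subtypeL fun n => hR _ (hw n)
  obtain ⟨z, hz, hbz⟩ := @IsCompact.ultrafilter_le_nhds' Z (sigmaTop X) K hKc
    ((hyperfilter ℕ).map b) (Ultrafilter.mem_map.2 (univ_mem' (hb.mem_of_convex hK hw)))
  refine ⟨b, hb, z, hz, tendsto_nhds_sigmaTop_iff.2 fun x hx => ?_⟩
  have hfz : f ⟨x, hx⟩ = x z :=
    tendsto_nhds_unique ((hf ⟨x, hx⟩).mono_left Nat.hyperfilter_le_atTop)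
      (tendsto_nhds_sigmaTop_iff.1 hbz x hx)
  exact hfz ▸ hf ⟨x, hx⟩

end DualPair

section IntegrableFunctions

variable {Ω : Type*} [MeasurableSpace Ω] {μ : Measure Ω}

theorem L1_ext_of_forall_setIntegral_eq {f g : Lp ℝ 1 μ}
    (hfg : ∀ B, MeasurableSet B → ∫ ω in B, f ω ∂μ = ∫ ω in B, g ω ∂μ) : f = g :=
  Lp.ext <| (L1.integrable_coeFn f).ae_eq_of_forall_setIntegral_eq f g (L1.integrable_coeFn g)
    fun B hB _ => hfg B hB

theorem exists_L1_density [SigmaFinite μ] {s : SignedMeasure Ω} (hs : ∀ B, μ B = 0 → s B = 0) :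
    ∃ g : Lp ℝ 1 μ, ∀ B, MeasurableSet B → s B = ∫ ω in B, g ω ∂μ := by
  have hac : s ≪ᵥ μ.toENNRealVectorMeasure := VectorMeasure.AbsolutelyContinuous.mk fun B hB h0 =>
    hs B (by rwa [Measure.toENNRealVectorMeasure_apply_measurable hB] at h0)
  have hint : Integrable (s.rnDeriv μ) μ := SignedMeasure.integrable_rnDeriv s μ
  refine ⟨hint.toL1, fun B hB => ?_⟩
  rw [integral_congr_ae (ae_restrict_of_ae hint.coeFn_toL1), ← withDensityᵥ_apply hint hB,
    SignedMeasure.withDensityᵥ_rnDeriv_eq s μ hac]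

theorem norm_toLp_add_of_disjoint_support {f g : Ω → ℝ} (hf : MemLp f 1 μ) (hg : MemLp g 1 μ)
    (hfg : Disjoint (Function.support f) (Function.support g)) :
    ‖hf.toLp f + hg.toLp g‖ = ‖hf.toLp f‖ + ‖hg.toLp g‖ := by
  have hf' := memLp_one_iff_integrable.1 hf
  have hg' := memLp_one_iff_integrable.1 hg
  have hnorm (ω : Ω) : ‖(f + g) ω‖ = ‖f ω‖ + ‖g ω‖ := by
    by_cases hω : f ω = 0
    · simp [hω]
    · simp [Function.notMem_support.1 (Set.disjoint_left.1 hfg hω)]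
  calc ‖hf.toLp f + hg.toLp g‖ = ∫ ω, ‖(f + g) ω‖ ∂μ := by
        rw [← MemLp.toLp_add]
        exact L1.norm_of_fun_eq_integral_norm (hf'.add hg')
    _ = (∫ ω, ‖f ω‖ ∂μ) + ∫ ω, ‖g ω‖ ∂μ := by
        simp_rw [hnorm]
        exact integral_add hf'.norm hg'.norm
    _ = ‖hf.toLp f‖ + ‖hg.toLp g‖ :=
        (congrArg₂ _ (L1.norm_of_fun_eq_integral_norm hf')
          (L1.norm_of_fun_eq_integral_norm hg')).symm

theorem indicatorConstLp_eq_smul_one {B : Set Ω} (hB : MeasurableSet B) (hμB : μ B ≠ ⊤) (c : ℝ) :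
    indicatorConstLp 1 hB hμB c = c • indicatorConstLp 1 hB hμB (1 : ℝ) := by
  refine Lp.ext ?_
  filter_upwards [indicatorConstLp_coeFn (p := 1) (hs := hB) (hμs := hμB) (c := c),
    indicatorConstLp_coeFn (p := 1) (hs := hB) (hμs := hμB) (c := (1 : ℝ)),
    Lp.coeFn_smul c (indicatorConstLp 1 hB hμB (1 : ℝ))] with ω hc hone hsmul
  by_cases hω : ω ∈ B <;> simp [hc, hone, hsmul, hω]

theorem exists_simpleFunc_ae_abs_sub_le {r : Ω → ℝ} (hr : Measurable r) {C : ℝ}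
    (hC : ∀ᵐ ω ∂μ, |r ω| ≤ C) {ε : ℝ} (hε : 0 < ε) :
    ∃ q : SimpleFunc Ω ℝ, ∀ᵐ ω ∂μ, |r ω - q ω| ≤ ε := by
  let n (ω : Ω) : ℤ := ⌊max (-C) (min (r ω) C) / ε⌋
  have hn : Measurable n := by fun_prop
  have hfin : (range n).Finite := by
    refine (Set.finite_Icc ⌊-C / ε⌋ ⌊max (-C) C / ε⌋).subset ?_
    rintro _ ⟨ω, rfl⟩
    constructor <;> refine Int.floor_mono (div_le_div_of_nonneg_right ?_ hε.le)
    · exact le_max_left _ _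
    · exact max_le_max_left _ (min_le_right _ _)
  let q : SimpleFunc Ω ℤ := ⟨n, fun k => hn (measurableSet_singleton k), hfin⟩
  refine ⟨q.map fun k : ℤ => ε * k, ?_⟩
  filter_upwards [hC] with ω hω
  have hqω : q ω = ⌊r ω / ε⌋ := by
    change ⌊max (-C) (min (r ω) C) / ε⌋ = _
    rw [min_eq_left (abs_le.1 hω).2, max_eq_right (abs_le.1 hω).1]
  calc |r ω - ε * q ω| = |ε * Int.fract (r ω / ε)| := by
        rw [hqω, Int.fract, mul_sub, mul_div_cancel₀ _ hε.ne']
    _ = ε * Int.fract (r ω / ε) := abs_of_nonneg (mul_nonneg hε.le (Int.fract_nonneg _))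
    _ ≤ ε := mul_le_of_le_one_right hε.le (Int.fract_lt_one _).le

/-- Integration over `B` as a continuous linear functional on `L¹(μ)`. -/
def setIntegralCLM (μ : Measure Ω) (B : Set Ω) : Lp ℝ 1 μ →L[ℝ] ℝ where
  toFun f := ∫ ω in B, f ω ∂μ
  map_add' f g := by
    rw [integral_congr_ae (ae_restrict_of_ae (Lp.coeFn_add f g))]
    exact integral_add (L1.integrable_coeFn f).integrableOn (L1.integrable_coeFn g).integrableOn
  map_smul' c f := by
    rw [integral_congr_ae (ae_restrict_of_ae (Lp.coeFn_smul c f))]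
    exact integral_smul c _
  cont := continuous_setIntegral B

variable [IsFiniteMeasure μ]

theorem opNorm_le_of_forall_indicatorConstLp {θ : Lp ℝ 1 μ →L[ℝ] ℝ} {C : ℝ}
    (hC : 0 ≤ C) (hθ : ∀ B (hB : MeasurableSet B),
      |θ (indicatorConstLp 1 hB (measure_ne_top μ B) 1)| ≤ C * μ.real B) : ‖θ‖ ≤ C := by
  refine θ.opNorm_le_bound hC fun f => ?_
  induction f using Lp.induction ENNReal.one_ne_top with
  | indicatorConst c hB hμB =>
    rw [Lp.simpleFunc.coe_indicatorConst, indicatorConstLp_eq_smul_one, map_smul, norm_smul,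
      norm_smul, norm_indicatorConstLp one_ne_zero ENNReal.one_ne_top, mul_left_comm]
    gcongr
    simpa using hθ _ hB
  | add hf hg hdisj ihf ihg =>
    rw [norm_toLp_add_of_disjoint_support hf hg hdisj, map_add, mul_add]
    exact (norm_add_le _ _).trans (add_le_add ihf ihg)
  | isClosed => exact isClosed_le (by fun_prop) (by fun_prop)

theorem exists_L1_apply_indicatorConstLp_eq (ψ : Lp ℝ 1 μ →L[ℝ] ℝ) :
    ∃ r : Lp ℝ 1 μ, ∀ B (hB : MeasurableSet B),
      ψ (indicatorConstLp 1 hB (measure_ne_top μ B) 1) = ∫ ω in B, r ω ∂μ := by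
  classical
  let m (B : Set Ω) : ℝ :=
    if hB : MeasurableSet B then ψ (indicatorConstLp 1 hB (measure_ne_top μ B) 1) else 0
  have hm {B : Set Ω} (hB : MeasurableSet B) :
      m B = ψ (indicatorConstLp 1 hB (measure_ne_top μ B) 1) := dif_pos hB
  have hmle (B : Set Ω) : ‖m B‖ₑ ≤ (‖ψ‖₊ • μ) B := by
    by_cases hB : MeasurableSet B
    · rw [hm hB]
      refine (ψ.le_opENorm _).trans (mul_le_mul_right ?_ _)
      simpa using enorm_indicatorConstLp_le (p := 1) (hs := hB) (c := (1 : ℝ))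
    · simp [m, hB]
  let s : SignedMeasure Ω := VectorMeasure.of_additive_of_le_measure m hmle
    (fun B C hB hC hBC => by
      rw [hm hB, hm hC, hm (hB.union hC), ← map_add, indicatorConstLp_disjoint_union _ _ _ _ hBC])
    fun B hB => dif_neg hB
  obtain ⟨r, hr⟩ := exists_L1_density (μ := μ) (s := s) fun B hB => by
    exact enorm_eq_zero.1 (nonpos_iff_eq_zero.1 ((hmle B).trans_eq (by simp [hB])))
  exact ⟨r, fun B hB => (hm hB).symm.trans (hr B hB)⟩

theorem ae_abs_le_of_forall_abs_setIntegral_le {r : Ω → ℝ} (hr : Integrable r μ) {C : ℝ}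
    (h : ∀ B, MeasurableSet B → |∫ ω in B, r ω ∂μ| ≤ C * μ.real B) : ∀ᵐ ω ∂μ, |r ω| ≤ C := by
  have hconst (B : Set Ω) (c : ℝ) : ∫ _ in B, c ∂μ = c * μ.real B := by simp [mul_comm]
  have hle := ae_le_of_forall_setIntegral_le hr (integrable_const C) fun B hB _ =>
    (abs_le.1 (h B hB)).2.trans_eq (hconst B C).symm
  have hge := ae_le_of_forall_setIntegral_le (integrable_const (-C)) hr fun B hB _ =>
    (hconst B (-C)).trans_le ((neg_mul _ _).trans_le (abs_le.1 (h B hB)).1)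
  filter_upwards [hle, hge] with ω h₁ h₂ using abs_le.2 ⟨h₂, h₁⟩

theorem exists_mem_span_setIntegralCLM_apply_indicatorConstLp_eq (q : SimpleFunc Ω ℝ) :
    ∃ χ ∈ Submodule.span ℝ (setIntegralCLM μ '' {B | MeasurableSet B}),
      ∀ B (hB : MeasurableSet B),
        χ (indicatorConstLp 1 hB (measure_ne_top μ B) 1) = ∫ ω in B, q ω ∂μ := by
  refine ⟨∑ c ∈ q.range, c • setIntegralCLM μ (q ⁻¹' {c}), Submodule.sum_mem _ fun c _ =>
    Submodule.smul_mem _ _ (Submodule.subset_span ⟨_, q.measurableSet_fiber c, rfl⟩),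
    fun B hB => ?_⟩
  rw [← q.integral_eq_integral q.integrable_of_isFiniteMeasure, q.integral_eq, sum_apply]
  refine Finset.sum_congr rfl fun c _ => ?_
  have hc := setIntegral_indicatorConstLp (p := 1) (q.measurableSet_fiber c) hB
    (measure_ne_top μ B) (1 : ℝ)
  rw [smul_eq_mul, mul_one] at hc
  rw [measureReal_restrict_apply (q.measurableSet_fiber c), inter_comm, ← hc]
  exact mul_comm _ _

theorem dense_span_setIntegralCLM :
    Dense (Submodule.span ℝ (setIntegralCLM μ '' {B | MeasurableSet B}) :
      Set (Lp ℝ 1 μ →L[ℝ] ℝ)) := by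
  refine Metric.dense_iff.2 fun ψ ε hε => ?_
  obtain ⟨r, hr⟩ := exists_L1_apply_indicatorConstLp_eq ψ
  have hrint : Integrable r μ := L1.integrable_coeFn r
  have hrψ : ∀ᵐ ω ∂μ, |r ω| ≤ ‖ψ‖ := by
    refine ae_abs_le_of_forall_abs_setIntegral_le hrint fun B hB => ?_
    have hnorm := norm_indicatorConstLp (hs := hB) (hμs := measure_ne_top μ B) (c := (1 : ℝ))
      one_ne_zero ENNReal.one_ne_top
    rw [← hr B hB]
    exact (ψ.le_opNorm _).trans_eq (by simp [hnorm])
  obtain ⟨q, hq⟩ :=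
    exists_simpleFunc_ae_abs_sub_le (Lp.stronglyMeasurable r).measurable hrψ (half_pos hε)
  obtain ⟨χ, hχ_mem, hχ⟩ := exists_mem_span_setIntegralCLM_apply_indicatorConstLp_eq (μ := μ) q
  refine ⟨χ, ?_, hχ_mem⟩
  have hsub : ‖ψ - χ‖ ≤ ε / 2 := by
    refine opNorm_le_of_forall_indicatorConstLp (half_pos hε).le fun B hB => ?_
    rw [sub_apply, hr B hB, hχ B hB, ← integral_sub hrint.integrableOn
      q.integrable_of_isFiniteMeasure.integrableOn]
    exact norm_setIntegral_le_of_norm_le_const_ae' (f := fun ω => r ω - q ω) (measure_lt_top μ B)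
      (hq.mono fun ω hω _ => hω)
  rw [mem_ball_iff_norm, norm_sub_rev]
  exact hsub.trans_lt (half_lt_self hε)

end IntegrableFunctions

section DensityOperator

variable {Ω : Type*} [MeasurableSpace Ω] {μ : Measure Ω} {Z : Type*} [NormedAddCommGroup Z]
  [NormedSpace ℝ Z] {ν : VectorMeasure Ω (Z →L[ℝ] ℝ)} {T : Z →L[ℝ] Lp ℝ 1 μ}

theorem exists_L1_density_of_continuousLinearMap [SigmaFinite μ] {E : Type*}
    [NormedAddCommGroup E] [NormedSpace ℝ E] {ν : VectorMeasure Ω E}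
    (hν : ∀ A, μ A = 0 → ν A = 0) (ζ : E →L[ℝ] ℝ) :
    ∃ g : Lp ℝ 1 μ, ∀ B, MeasurableSet B → ζ (ν B) = ∫ ω in B, g ω ∂μ :=
  exists_L1_density (s := ν.mapRange ζ.toLinearMap.toAddMonoidHom ζ.continuous) fun B hB =>
    (congrArg ζ (hν B hB)).trans (map_zero ζ)

/-- `T z` is the density with respect to `μ` of the scalar measure `B ↦ ⟨ν B, z⟩`, for every
`z : Z`. -/
def IsDensityOperator (μ : Measure Ω) (ν : VectorMeasure Ω (Z →L[ℝ] ℝ))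
    (T : Z →L[ℝ] Lp ℝ 1 μ) : Prop :=
  ∀ z B, MeasurableSet B → ν B z = setIntegralCLM μ B (T z)

theorem exists_isDensityOperator [CompleteSpace Z] [SigmaFinite μ]
    (hν : ∀ A, μ A = 0 → ν A = 0) : ∃ T : Z →L[ℝ] Lp ℝ 1 μ, IsDensityOperator μ ν T := by
  choose f hf using fun z : Z =>
    exists_L1_density_of_continuousLinearMap hν (ContinuousLinearMap.apply ℝ ℝ z)
  replace hf (z : Z) (B : Set Ω) (hB : MeasurableSet B) : ν B z = setIntegralCLM μ B (f z) :=
    hf z B hB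
  have hext {g h : Lp ℝ 1 μ} (hgh : ∀ B, MeasurableSet B →
      setIntegralCLM μ B g = setIntegralCLM μ B h) : g = h := L1_ext_of_forall_setIntegral_eq hgh
  let L : Z →ₗ[ℝ] Lp ℝ 1 μ :=
    { toFun := f
      map_add' u v := hext fun B hB => by
        rw [map_add, ← hf _ B hB, ← hf _ B hB, ← hf _ B hB, map_add]
      map_smul' c u := hext fun B hB => by
        rw [map_smul, ← hf _ B hB, ← hf _ B hB, map_smul, RingHom.id_apply] }
  refine ⟨ContinuousLinearMap.ofSeqClosedGraph (g := L) fun u z g hu hg => hext fun B hB => ?_, hf⟩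
  refine tendsto_nhds_unique (((setIntegralCLM μ B).continuous.tendsto g).comp hg) ?_
  have hlim : Tendsto (fun n => ν B (u n)) atTop (𝓝 (ν B z)) := ((ν B).continuous.tendsto z).comp hu
  simp_rw [hf _ B hB] at hlim
  exact hlim

namespace IsDensityOperator

theorem exists_apply_comp_eq [IsFiniteMeasure μ] (hT : IsDensityOperator μ ν T)
    (hν : ∀ A, μ A = 0 → ν A = 0) (ζ : (Z →L[ℝ] ℝ) →L[ℝ] ℝ) :
    ∃ g : Lp ℝ 1 μ, ∀ ψ : Lp ℝ 1 μ →L[ℝ] ℝ, ζ (ψ.comp T) = ψ g := by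
  obtain ⟨g, hg⟩ := exists_L1_density_of_continuousLinearMap hν ζ
  refine ⟨g, fun ψ => ?_⟩
  have hext : ζ.comp (ContinuousLinearMap.compL ℝ Z (Lp ℝ 1 μ) ℝ |>.flip T) =
      ContinuousLinearMap.apply ℝ ℝ g := by
    refine ContinuousLinearMap.ext_on dense_span_setIntegralCLM ?_
    rintro _ ⟨B, hB, rfl⟩
    have hνB : (setIntegralCLM μ B).comp T = ν B :=
      ContinuousLinearMap.ext fun z => (hT z B hB).symm
    exact (congrArg ζ hνB).trans (hg B hB)
  exact DFunLike.congr_fun hext ψ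

theorem le_of_mem_closure_convexHull_avgRange [IsFiniteMeasure μ] (hT : IsDensityOperator μ ν T)
    {A : Set Ω} {x : Z →L[ℝ] ℝ}
    (hx : x ∈ @closure _ (wstarTop Z) (convexHull ℝ (avgRange μ ν A))) {z : Z} {c : ℝ}
    (hc : ∀ᵐ ω ∂μ, ω ∈ A → c ≤ T z ω) : c ≤ x z := by
  have hconvex : Convex ℝ {w : Z →L[ℝ] ℝ | c ≤ w z} :=
    convex_halfSpace_ge (ContinuousLinearMap.apply ℝ ℝ z).toLinearMap.isLinear c
  have hclosed : @IsClosed _ (wstarTop Z) {w : Z →L[ℝ] ℝ | c ≤ w z} :=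
    isClosed_induced_iff.2
      ⟨{p | c ≤ p z}, isClosed_le continuous_const (continuous_apply z), rfl⟩
  have hsub : avgRange μ ν A ⊆ {w | c ≤ w z} := by
    rintro _ ⟨B, hB, hBA, hpos, rfl⟩
    have hμB : 0 < (μ B).toReal := ENNReal.toReal_pos hpos.ne' (measure_ne_top _ _)
    have hint : ∫ _ in B, c ∂μ ≤ ∫ ω in B, T z ω ∂μ :=
      setIntegral_mono_on_ae (integrable_const c).integrableOn
        (L1.integrable_coeFn (T z)).integrableOn hB (hc.mono fun ω hω hωB => hω (hBA hωB))
    change c ≤ (μ B).toReal⁻¹ * ν B z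
    rw [hT z B hB, le_inv_mul_iff₀ hμB]
    simpa [Measure.real] using! hint
  have hmin := @closure_minimal _ (wstarTop Z) _ _ (convexHull_min hsub hconvex) hclosed
  exact hmin hx

end IsDensityOperator

end DensityOperator

section ConditionG

variable {Ω : Type*} [MeasurableSpace Ω] {μ : Measure Ω} [IsFiniteMeasure μ] {Z : Type*}
  [NormedAddCommGroup Z] [NormedSpace ℝ Z] {X : Submodule ℝ (Z →L[ℝ] ℝ)}
  {ν : VectorMeasure Ω (Z →L[ℝ] ℝ)} {T : Z →L[ℝ] Lp ℝ 1 μ}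

theorem CondG.measure_eq_zero (hG : CondG μ ν X) (hT : IsDensityOperator μ ν T) {A : Set Ω}
    (hA : MeasurableSet A) {c : ℝ}
    (h : ∀ x ∈ X, ∃ z, x z < c ∧ ∀ᵐ ω ∂μ, ω ∈ A → c ≤ T z ω) : μ A = 0 := by
  by_contra hne
  obtain ⟨x, hx, hxX⟩ := hG A hA (pos_iff_ne_zero.2 hne)
  obtain ⟨z, hxz, hz⟩ := h x hxX
  exact (hT.le_of_mem_closure_convexHull_avgRange hx hz).not_gt hxz

theorem CondG.ae_nonpos_of_tendsto (hG : CondG μ ν X) (hT : IsDensityOperator μ ν T) {u : ℕ → Z}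
    {q : Ω → ℝ} (hu : ∀ x ∈ X, Tendsto (fun k => x (u k)) atTop (𝓝 0))
    (hq : ∀ᵐ ω ∂μ, Tendsto (fun k => T (u k) ω) atTop (𝓝 (q ω))) : ∀ᵐ ω ∂μ, q ω ≤ 0 := by
  let S (m j : ℕ) : Set Ω := {ω | ∀ k ≥ j, 1 / ((m : ℝ) + 1) ≤ T (u k) ω}
  have hS_meas (m j : ℕ) : MeasurableSet (S m j) := by
    simp only [S, ofPred_forall]
    exact .iInter fun k => .iInter fun _ =>
      measurableSet_le measurable_const (Lp.stronglyMeasurable (T (u k))).measurable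
  have hS_null (m j : ℕ) : μ (S m j) = 0 := by
    refine hG.measure_eq_zero hT (hS_meas m j) (c := 1 / (m + 1)) fun x hx => ?_
    obtain ⟨k, hxk, hjk⟩ := (((hu x hx).eventually_lt_const (Nat.one_div_pos_of_nat (n := m))).and
      (eventually_ge_atTop j)).exists
    exact ⟨u k, hxk, .of_forall fun ω hω => hω k hjk⟩
  have hS_ae : ∀ᵐ ω ∂μ, ∀ m j, ω ∉ S m j :=
    ae_all_iff.2 fun m => ae_all_iff.2 fun j => measure_eq_zero_iff_ae_notMem.1 (hS_null m j)
  filter_upwards [hS_ae, hq] with ω hωS hω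
  by_contra! hpos
  obtain ⟨m, hm⟩ := exists_nat_one_div_lt hpos
  obtain ⟨j, hj⟩ := eventually_atTop.1 (hω.eventually_const_lt hm)
  exact hωS m j fun k hk => (hj k hk).le

theorem CondG.le_zero_of_tendsto (hG : CondG μ ν X) (hT : IsDensityOperator μ ν T) {u : ℕ → Z}
    {q : Lp ℝ 1 μ} (hu : ∀ x ∈ X, Tendsto (fun k => x (u k)) atTop (𝓝 0))
    (hq : Tendsto (fun k => T (u k)) atTop (𝓝 q)) : q ≤ 0 := by
  obtain ⟨σ, hσ, hlim⟩ := (tendstoInMeasure_of_tendsto_Lp hq).exists_seq_tendsto_ae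
  rw [← Lp.coeFn_le]
  filter_upwards [hG.ae_nonpos_of_tendsto hT (fun x hx => (hu x hx).comp hσ.tendsto_atTop) hlim,
    Lp.coeFn_zero ℝ 1 μ] with ω hω h0
  rwa [h0]

theorem CondG.eq_zero_of_tendsto (hG : CondG μ ν X) (hT : IsDensityOperator μ ν T) {u : ℕ → Z}
    {q : Lp ℝ 1 μ} (hu : ∀ x ∈ X, Tendsto (fun k => x (u k)) atTop (𝓝 0))
    (hq : Tendsto (fun k => T (u k)) atTop (𝓝 q)) : q = 0 := by
  refine le_antisymm (hG.le_zero_of_tendsto hT hu hq) ?_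
  rw [← neg_nonpos]
  exact hG.le_zero_of_tendsto hT (u := fun k => -u k)
    (fun x hx => by simpa using (hu x hx).neg) (by simpa using hq.neg)

theorem CondG.le_zero_of_forall_exists (hG : CondG μ ν X) (hT : IsDensityOperator μ ν T)
    {g : Lp ℝ 1 μ} (hg : ∀ x ∈ X, ∀ δ > 0, ∃ z, T z = g ∧ x z ≤ δ) : g ≤ 0 := by
  have hnull (m : ℕ) : μ {ω | 1 / ((m : ℝ) + 1) ≤ g ω} = 0 := by
    refine hG.measure_eq_zero hT (c := 1 / (m + 1))
      (measurableSet_le measurable_const (Lp.stronglyMeasurable g).measurable) fun x hx => ?_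
    obtain ⟨z, rfl, hz⟩ := hg x hx _ (half_pos (Nat.one_div_pos_of_nat (n := m)))
    exact ⟨z, hz.trans_lt (half_lt_self Nat.one_div_pos_of_nat), .of_forall fun ω hω => hω⟩
  rw [← Lp.coeFn_le]
  filter_upwards [ae_all_iff.2 fun m => measure_eq_zero_iff_ae_notMem.1 (hnull m),
    Lp.coeFn_zero ℝ 1 μ] with ω hω h0
  rw [h0]
  by_contra! hpos
  obtain ⟨m, hm⟩ := exists_nat_one_div_lt hpos
  exact hω m hm.le

theorem CondG.eq_zero_of_forall_exists (hG : CondG μ ν X) (hT : IsDensityOperator μ ν T)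
    {g : Lp ℝ 1 μ} (hg : ∀ x ∈ X, ∀ δ > 0, ∃ z, T z = g ∧ |x z| ≤ δ) : g = 0 := by
  refine le_antisymm (hG.le_zero_of_forall_exists hT fun x hx δ hδ => ?_) ?_
  · obtain ⟨z, hz, hxz⟩ := hg x hx δ hδ
    exact ⟨z, hz, (le_abs_self _).trans hxz⟩
  · rw [← neg_nonpos]
    refine hG.le_zero_of_forall_exists hT fun x hx δ hδ => ?_
    obtain ⟨z, rfl, hxz⟩ := hg x hx δ hδ
    exact ⟨-z, map_neg T z, (map_neg x z).trans_le ((neg_le_abs _).trans hxz)⟩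

theorem CondG.isClosed_image (hG : CondG μ ν X) (hT : IsDensityOperator μ ν T)
    (hXc : IsClosed (X : Set (Z →L[ℝ] ℝ))) (hX : IsNorming X)
    (hCBC : DualBallConvexBlockCompact X) {K : Set Z} (hK : Convex ℝ K)
    (hKc : @IsCompact _ (sigmaTop X) K) : IsClosed (T '' K) := by
  refine IsSeqClosed.isClosed fun f g hf hfg => ?_
  choose w hwK hw using hf
  obtain ⟨b, hb, z, hz, hbz⟩ := exists_convexBlock_tendsto_of_isCompact hXc hX hCBC hK hKc hwK
  have hTb : Tendsto (T ∘ b) atTop (𝓝 g) :=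
    (hb.map T.toLinearMap).tendsto (hfg.congr fun n => (hw n).symm)
  have hsub : g - T z = 0 := by
    refine hG.eq_zero_of_tendsto hT (u := fun k => b k - z) (fun x hx => ?_) ?_
    · simpa using (tendsto_nhds_sigmaTop_iff.1 hbz x hx).sub_const (x z)
    · simpa using hTb.sub_const (T z)
  exact ⟨z, hz, (sub_eq_zero.1 hsub).symm⟩

theorem CondG.tendsto_nhdsWithin_sigmaTop_zero (hG : CondG μ ν X) (hν : ∀ A, μ A = 0 → ν A = 0)
    (hT : IsDensityOperator μ ν T) (hXc : IsClosed (X : Set (Z →L[ℝ] ℝ))) (hX : IsNorming X)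
    (hCBC : DualBallConvexBlockCompact X) {K : Set Z} (hK : Convex ℝ K)
    (hKc : @IsCompact _ (sigmaTop X) K) {A : Set Ω} (hA : MeasurableSet A) :
    Tendsto (ν A) (@nhdsWithin Z (sigmaTop X) 0 K) (𝓝 0) := by
  refine (tendsto_iff_ultrafilter _ _ _).2 fun F hF => ?_
  have hFK : K ∈ F := hF (@self_mem_nhdsWithin Z (sigmaTop X) 0 K)
  have hF0 : Tendsto id (F : Filter Z) (@nhds Z (sigmaTop X) 0) :=
    hF.trans (@nhdsWithin_le_nhds Z (sigmaTop X) 0 K)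
  obtain ⟨R, hR⟩ := hX.exists_norm_le_of_isCompact hXc hKc
  obtain ⟨ζ, hζ⟩ := exists_tendsto_apply_of_norm_le F (mem_of_superset hFK hR)
  obtain ⟨g, hg⟩ := hT.exists_apply_comp_eq hν ζ
  have hTg (ψ : Lp ℝ 1 μ →L[ℝ] ℝ) : Tendsto (fun z => ψ (T z)) F (𝓝 (ψ g)) :=
    hg ψ ▸ hζ (ψ.comp T)
  have hg0 : g = 0 := by
    refine hG.eq_zero_of_forall_exists hT fun x hx δ hδ => ?_
    have hslab : Convex ℝ (K ∩ x ⁻¹' Metric.closedBall 0 δ) :=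
      hK.inter ((convex_closedBall 0 δ).linear_preimage x.toLinearMap)
    have hmem : g ∈ T '' (K ∩ x ⁻¹' Metric.closedBall 0 δ) := by
      refine mem_of_convex_of_isClosed_of_forall_tendsto (hslab.linear_image T.toLinearMap)
        (hG.isClosed_image hT hXc hX hCBC hslab
          (isCompact_sigmaTop_inter_preimage hKc hx Metric.isClosed_closedBall)) ?_ hTg
      have hx0 : ∀ᶠ z in (F : Filter Z), x z ∈ Metric.closedBall 0 δ :=
        (tendsto_nhds_sigmaTop_iff.1 hF0 x hx).eventually_mem
          (by simpa using Metric.closedBall_mem_nhds 0 hδ)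
      filter_upwards [hFK, hx0] with z hzK hzx using mem_image_of_mem T ⟨hzK, hzx⟩
    obtain ⟨z, hz, hzg⟩ := hmem
    exact ⟨z, hzg, mem_closedBall_zero_iff.1 hz.2⟩
  simpa [hg0, Function.comp_def, ← hT _ A hA] using hTg (setIntegralCLM μ A)

end ConditionG

/-- Theorem B: if `(B_{X*}, w*)` is convex block compact, `(X, μ(X,Z))` is complete and
`ν ∈ ca(μ, Z*)` satisfies condition (G), then `ν(Σ) ⊆ X`. -/
theorem range_subset_of_convexBlockCompact_of_mackeyComplete_of_condG
    {Ω : Type*} [MeasurableSpace Ω] (μ : Measure Ω) [IsFiniteMeasure μ]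
    {Z : Type*} [NormedAddCommGroup Z] [NormedSpace ℝ Z] [CompleteSpace Z]
    (X : Submodule ℝ (Z →L[ℝ] ℝ)) (hXclosed : IsClosed (X : Set (Z →L[ℝ] ℝ)))
    (hXnorming : IsNorming X)
    (hCBC : DualBallConvexBlockCompact ↥X)
    (hMackeyComplete : @CompleteSpace ↥X (mackeyUniformity X))
    (ν : VectorMeasure Ω (Z →L[ℝ] ℝ))
    (hν : ∀ A : Set Ω, μ A = 0 → ν A = 0)
    (hG : CondG μ ν X) :
    ∀ A : Set Ω, MeasurableSet A → ν A ∈ X := by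
  intro A hA
  obtain ⟨T, hT⟩ := exists_isDensityOperator (μ := μ) hν
  exact mem_of_forall_mackeySets_tendsto hMackeyComplete fun K hK =>
    hG.tendsto_nhdsWithin_sigmaTop_zero hν hT hXclosed hXnorming hCBC hK.1 hK.2.2 hA
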